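/- arXiv:2103.15000 — 3 statements merged into one kernel-verified Lean document; each statement's English description precedes it below -/
import Mathlib

section
/- Second Fundamental Theorem for the GFD (Riemann–Liouville case): Let (κ, k) be a pair of Sonine kernels from S_{−1}. Then for every f ∈ C¹_{−1}(0,∞) and every t > 0, (I_{(κ)} D_{(k)} f)(t) = f(t). -/
open Real MeasureTheory Set Filter Topology

/-- The Laplace convolution `(f * g)(t) = ∫₀ᵗ f(t-τ) g(τ) dτ`. -/
noncomputable def lconv (f g : ℝ → ℝ) : ℝ → ℝ :=
  fun t => ∫ τ in (0:ℝ)..t, f (t - τ) * g τ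

/-- The space `C_{-1}(0,∞)`: functions of the form `t^p f₁(t)` with `p > -1`
and `f₁` continuous on `[0,∞)`. -/
def Cm1 (f : ℝ → ℝ) : Prop :=
  ∃ p : ℝ, -1 < p ∧ ∃ f₁ : ℝ → ℝ, ContinuousOn f₁ (Set.Ici 0) ∧
    ∀ t : ℝ, 0 < t → f t = t ^ p * f₁ t

/-- The subspace `C_{-1,0}(0,∞)`: functions of the form `t^p f₁(t)` with `-1 < p < 0`
and `f₁` continuous on `[0,∞)`. -/
def Cm10 (f : ℝ → ℝ) : Prop :=
  ∃ p : ℝ, -1 < p ∧ p < 0 ∧ ∃ f₁ : ℝ → ℝ, ContinuousOn f₁ (Set.Ici 0) ∧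
    ∀ t : ℝ, 0 < t → f t = t ^ p * f₁ t

noncomputable def pw (a : ℝ) : ℝ → ℝ := (Ioi (0:ℝ)).indicator (fun x => x ^ a)

lemma pw_nonneg (a x : ℝ) : 0 ≤ pw a x := by
  unfold pw
  apply indicator_nonneg
  intro y hy
  exact Real.rpow_nonneg (le_of_lt hy) a

lemma pw_pos {a x : ℝ} (hx : 0 < x) : pw a x = x ^ a := by
  simp [pw, hx]

lemma pw_neg {a x : ℝ} (hx : x ≤ 0) : pw a x = 0 := by
  simp [pw, hx]

lemma pw_scale (a : ℝ) {x : ℝ} (hx : 0 < x) (u : ℝ) : pw a (x * u) = x ^ a * pw a u := by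
  rcases le_or_gt u 0 with h | h
  · rw [pw_neg h, pw_neg (mul_nonpos_of_nonneg_of_nonpos hx.le h), mul_zero]
  · rw [pw_pos h, pw_pos (mul_pos hx h), Real.mul_rpow hx.le h.le]

lemma beta_one {a b : ℝ} (ha : -1 < a) (hb : -1 < b) :
    Integrable (fun τ => pw a τ * pw b (1 - τ)) := by
  have h := Complex.betaIntegral_convergent (u := ((a + 1 : ℝ) : ℂ)) (v := ((b + 1 : ℝ) : ℂ))
    (by simp; linarith) (by simp; linarith)
  rw [intervalIntegrable_iff_integrableOn_Ioo_of_le zero_le_one] at h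
  have h2 := h.norm
  have h3 : IntegrableOn (fun τ => pw a τ * pw b (1 - τ)) (Ioo 0 1) := by
    refine IntegrableOn.congr_fun h2 ?_ measurableSet_Ioo
    intro x hx
    have h1 : (0:ℝ) < 1 - x := by linarith [hx.2]
    simp only
    rw [pw_pos hx.1, pw_pos h1, norm_mul, ← Complex.ofReal_one, ← Complex.ofReal_sub,
      Complex.norm_cpow_eq_rpow_re_of_pos hx.1, ← Complex.ofReal_sub,
      Complex.norm_cpow_eq_rpow_re_of_pos h1]
    simp
  rw [← integrable_indicator_iff measurableSet_Ioo] at h3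
  refine h3.congr (Eventually.of_forall fun x => ?_)
  symm
  show pw a x * pw b (1 - x) = _
  by_cases hx : x ∈ Ioo (0:ℝ) 1
  · simp [indicator_of_mem hx]
  · rw [indicator_of_notMem hx]
    rcases le_or_gt x 0 with h0 | h0
    · rw [pw_neg h0, zero_mul]
    · have : 1 ≤ x := by
        by_contra hc
        exact hx ⟨h0, by linarith⟩
      rw [pw_neg (by linarith : 1 - x ≤ 0), mul_zero]

lemma beta_scale (a b : ℝ) {x : ℝ} (hx : 0 < x) (u : ℝ) :
    pw a (x * u) * pw b (x - x * u) = x ^ (a + b) * (pw a u * pw b (1 - u)) := by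
  have : x - x * u = x * (1 - u) := by ring
  rw [this, pw_scale a hx, pw_scale b hx, Real.rpow_add hx]; ring

lemma beta_int {a b : ℝ} (ha : -1 < a) (hb : -1 < b) (x : ℝ) :
    Integrable (fun τ => pw a τ * pw b (x - τ)) := by
  rcases le_or_gt x 0 with h | h
  · have : (fun τ => pw a τ * pw b (x - τ)) = fun _ => 0 := by
      ext τ
      rcases le_or_gt τ 0 with h0 | h0
      · rw [pw_neg h0, zero_mul]
      · rw [pw_neg (by linarith : x - τ ≤ 0), mul_zero]
    rw [this]; exact integrable_zero _ _ _
  · rw [← integrable_comp_mul_left_iff _ h.ne']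
    simp only [beta_scale a b h]
    exact (beta_one ha hb).const_mul _

lemma beta_val {a b : ℝ} (x : ℝ) :
    ∫ τ, pw a τ * pw b (x - τ) = (∫ τ, pw a τ * pw b (1 - τ)) * pw (a + b + 1) x := by
  rcases le_or_gt x 0 with h | h
  · have : (fun τ => pw a τ * pw b (x - τ)) = fun _ => 0 := by
      ext τ
      rcases le_or_gt τ 0 with h0 | h0
      · rw [pw_neg h0, zero_mul]
      · rw [pw_neg (by linarith : x - τ ≤ 0), mul_zero]
    rw [this, pw_neg h]; simp
  · have := Measure.integral_comp_mul_left (fun τ => pw a τ * pw b (x - τ)) x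
    simp only [beta_scale a b h, integral_const_mul] at this
    rw [abs_of_pos (inv_pos.mpr h), smul_eq_mul] at this
    rw [pw_pos h, Real.rpow_add_one h.ne', mul_comm, mul_right_comm, this]
    field_simp

def Good (F : ℝ → ℝ) : Prop := AEStronglyMeasurable F volume ∧
  ∃ a, -1 < a ∧ ∃ C, 0 ≤ C ∧ ∀ x, |F x| ≤ C * pw a x

noncomputable def cv (F G : ℝ → ℝ) : ℝ → ℝ :=
  convolution F G (ContinuousLinearMap.mul ℝ ℝ) volume

lemma Good.zero {F : ℝ → ℝ} (h : Good F) {x : ℝ} (hx : x ≤ 0) : F x = 0 := by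
  obtain ⟨_, a, _, C, _, h⟩ := h
  have := h x
  rw [pw_neg hx, mul_zero] at this
  exact abs_nonpos_iff.mp this

lemma Good.abs {F : ℝ → ℝ} (h : Good F) : Good (fun x => ‖F x‖) := by
  obtain ⟨h0, a, ha, C, hC, h⟩ := h
  exact ⟨h0.norm, a, ha, C, hC, by simpa using h⟩

lemma Good.ex {F G : ℝ → ℝ} (hF : Good F) (hG : Good G) (x : ℝ) :
    ConvolutionExistsAt F G x (ContinuousLinearMap.mul ℝ ℝ) volume := by
  obtain ⟨hF0, a, ha, C, hC, hF⟩ := hF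
  obtain ⟨hG0, b, hb, D, hD, hG⟩ := hG
  unfold ConvolutionExistsAt
  refine Integrable.mono' (((beta_int ha hb x).const_mul (C * D))) ?_ ?_
  · exact hF0.convolution_integrand_snd (ContinuousLinearMap.mul ℝ ℝ) hG0 x
  · refine Eventually.of_forall fun τ => ?_
    simp only [ContinuousLinearMap.mul_apply', norm_mul, Real.norm_eq_abs]
    calc |F τ| * |G (x - τ)| ≤ (C * pw a τ) * (D * pw b (x - τ)) :=
          mul_le_mul (hF _) (hG _) (abs_nonneg _) (mul_nonneg hC (pw_nonneg _ _))
      _ = _ := by ring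

lemma Good.cv {F G : ℝ → ℝ} (hF : Good F) (hG : Good G) : Good (cv F G) := by
  obtain ⟨hF0, a, ha, C, hC, hF⟩ := hF
  obtain ⟨hG0, b, hb, D, hD, hG⟩ := hG
  refine ⟨?_, a + b + 1, by linarith, C * D * ∫ τ, pw a τ * pw b (1 - τ), ?_, fun x => ?_⟩
  · exact (hF0.convolution_integrand (ContinuousLinearMap.mul ℝ ℝ) hG0).integral_prod_right'
  · exact mul_nonneg (mul_nonneg hC hD)
      (integral_nonneg fun τ => mul_nonneg (pw_nonneg _ _) (pw_nonneg _ _))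
  · rw [mul_assoc, ← beta_val, ← integral_const_mul, ← Real.norm_eq_abs]
    refine norm_integral_le_of_norm_le ((beta_int ha hb x).const_mul _) ?_
    refine Eventually.of_forall fun τ => ?_
    simp only [ContinuousLinearMap.mul_apply', norm_mul, Real.norm_eq_abs]
    calc |F τ| * |G (x - τ)| ≤ (C * pw a τ) * (D * pw b (x - τ)) :=
          mul_le_mul (hF _) (hG _) (abs_nonneg _) (mul_nonneg hC (pw_nonneg _ _))
      _ = _ := by ring

lemma cv_comm (F G : ℝ → ℝ) : cv F G = cv G F := by
  ext x
  unfold cv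
  rw [convolution_mul, convolution_mul_swap]
  simp only [mul_comm]

lemma cv_assoc {F G H : ℝ → ℝ} (hF : Good F) (hG : Good G) (hH : Good H) :
    cv (cv F G) H = cv F (cv G H) := by
  ext x
  unfold cv
  apply convolution_assoc _ _ _ _ (fun x y z => by simp [mul_assoc]) hF.1 hG.1 hH.1
  · exact Eventually.of_forall fun y => hF.ex hG y
  · exact Eventually.of_forall fun y => hG.abs.ex hH.abs y
  · exact hF.abs.ex (hG.abs.cv hH.abs) x

lemma cv_eq {F G : ℝ → ℝ} (hF : ∀ x ≤ 0, F x = 0) (hG : ∀ x ≤ 0, G x = 0) {x : ℝ} (hx : 0 < x) :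
    cv F G x = ∫ τ in (0:ℝ)..x, F (x - τ) * G τ := by
  unfold cv
  rw [convolution_mul_swap, intervalIntegral.integral_of_le hx.le]
  symm
  apply setIntegral_eq_integral_of_forall_compl_eq_zero
  intro τ hτ
  rcases le_or_gt τ 0 with h0 | h0
  · rw [hG _ h0, mul_zero]
  · have : x < τ := by
      by_contra hc
      exact hτ ⟨h0, by linarith⟩
    rw [hF _ (by linarith), zero_mul]

lemma lconv_eq {F G F1 G1 : ℝ → ℝ} (hF : ∀ x ≤ 0, F1 x = 0) (hG : ∀ x ≤ 0, G1 x = 0) {T : ℝ}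
    (hF1 : ∀ x ∈ Ioc 0 T, F x = F1 x) (hG1 : ∀ᵐ x, x ∈ Ioo 0 T → G x = G1 x)
    {x : ℝ} (hx : x ∈ Ioc 0 T) : lconv F G x = cv F1 G1 x := by
  rw [cv_eq hF hG hx.1]
  unfold lconv
  apply intervalIntegral.integral_congr_ae
  have h₂ : ∀ᵐ y : ℝ, y ≠ x := by simp [ae_iff, measure_singleton]
  filter_upwards [hG1, h₂] with y hy hyx hy2
  rw [uIoc_of_le hx.1.le] at hy2
  have h3 : y < x := lt_of_le_of_ne hy2.2 hyx
  rw [hy ⟨hy2.1, by linarith [hx.2]⟩, hF1 _ ⟨by linarith, by linarith [hx.2, hy2.1]⟩]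

lemma Good.ii {F : ℝ → ℝ} (h : Good F) {T : ℝ} (hT : 0 ≤ T) :
    IntervalIntegrable F volume 0 T := by
  obtain ⟨h0, a, ha, C, hC, h⟩ := h
  have h1 := (intervalIntegral.intervalIntegrable_rpow' ha (a := 0) (b := T)).const_mul C
  rw [intervalIntegrable_iff_integrableOn_Ioc_of_le hT] at *
  refine Integrable.mono' h1 h0.restrict ?_
  filter_upwards [ae_restrict_mem measurableSet_Ioc] with x hx
  simpa [pw_pos hx.1] using h x

lemma good_of {F : ℝ → ℝ} (h : Cm1 F) (T : ℝ) : Good ((Ioc 0 T).indicator F) := by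
  obtain ⟨p, hp, f₁, hc, hf⟩ := h
  have hcF : ContinuousOn F (Ioc 0 T) := by
    have : ContinuousOn (fun t => t ^ p * f₁ t) (Ioc 0 T) := by
      apply ContinuousOn.mul
      · exact continuousOn_id.rpow_const (fun x hx => Or.inl hx.1.ne')
      · exact hc.mono fun x hx => hx.1.le
    exact this.congr fun x hx => hf x hx.1
  obtain ⟨C, hC⟩ := (isCompact_Icc (a := (0:ℝ)) (b := T)).exists_bound_of_continuousOn
    (hc.mono fun x hx => hx.1)
  refine ⟨?_, p, hp, |C|, abs_nonneg _, fun x => ?_⟩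
  · rw [aestronglyMeasurable_indicator_iff measurableSet_Ioc]
    exact hcF.aestronglyMeasurable measurableSet_Ioc
  · by_cases hx : x ∈ Ioc 0 T
    · rw [indicator_of_mem hx, hf x hx.1, pw_pos hx.1, abs_mul, abs_of_nonneg
        (Real.rpow_nonneg hx.1.le _), mul_comm]
      apply mul_le_mul_of_nonneg_right _ (Real.rpow_nonneg hx.1.le _)
      exact (hC x ⟨hx.1.le, hx.2⟩).trans (le_abs_self C)
    · rw [indicator_of_notMem hx, abs_zero]
      exact mul_nonneg (abs_nonneg _) (pw_nonneg _ _)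

lemma Cm10.cm1 {F : ℝ → ℝ} (h : Cm10 F) : Cm1 F := by
  obtain ⟨p, hp, _, h⟩ := h
  exact ⟨p, hp, h⟩

lemma cv_lin {F G H : ℝ → ℝ} (hF : Good F) (hG : Good G) (hH : Good H) (c x : ℝ) :
    cv F (fun s => c * G s + H s) x = c * cv F G x + cv F H x := by
  have h1 := hF.ex hG x
  have h2 := hF.ex hH x
  unfold ConvolutionExistsAt at h1 h2
  simp only [ContinuousLinearMap.mul_apply'] at h1 h2
  unfold cv
  simp only [convolution_mul]
  rw [← integral_const_mul, ← integral_add (h1.const_mul c) h2]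
  congr 1; ext t; ring

theorem statement8 (κ k : ℝ → ℝ) (hκ : Cm10 κ) (hk : Cm10 k)
    (hSonine : ∀ t : ℝ, 0 < t → lconv κ k t = 1)
    (f : ℝ → ℝ)
    (hf_diff : ∀ t : ℝ, 0 < t → DifferentiableAt ℝ f t)
    (hf' : Cm1 (deriv f)) :
    ∀ t : ℝ, 0 < t → lconv κ (fun s => deriv (lconv k f) s) t = f t := by
  intro T hT
  have gK := good_of hκ.cm1 T
  have gk := good_of hk.cm1 T
  have gG := good_of hf' T
  have gE : Good ((Ioc 0 T).indicator (fun _ => (1:ℝ))) :=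
    good_of ⟨0, by norm_num, fun _ => 1, continuousOn_const, fun t _ => by simp⟩ T
  have eK : ∀ x ∈ Ioc 0 T, κ x = (Ioc 0 T).indicator κ x := fun x hx => by
    rw [indicator_of_mem hx]
  have ek : ∀ x ∈ Ioc 0 T, k x = (Ioc 0 T).indicator k x := fun x hx => by
    rw [indicator_of_mem hx]
  have eG : ∀ x ∈ Ioc 0 T, deriv f x = (Ioc 0 T).indicator (deriv f) x := fun x hx => by
    rw [indicator_of_mem hx]
  have eE : ∀ x ∈ Ioc 0 T, 1 = (Ioc 0 T).indicator (fun _ => (1:ℝ)) x := fun x hx => by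
    rw [indicator_of_mem hx]
  generalize (Ioc 0 T).indicator κ = K at *
  generalize (Ioc 0 T).indicator k = k' at *
  generalize (Ioc 0 T).indicator (deriv f) = G at *
  generalize (Ioc 0 T).indicator (fun _ => (1:ℝ)) = E at *
  -- convolution with E is integration
  have hE : ∀ H : ℝ → ℝ, (∀ x ≤ 0, H x = 0) → ∀ x ∈ Ioc 0 T,
      cv E H x = ∫ τ in (0:ℝ)..x, H τ := by
    intro H hH x hx
    rw [← lconv_eq (F := fun _ => 1) (G := H) (fun x hx => gE.zero hx) hH eE (by simp) hx]
    simp [lconv]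
  have iG := gG.ii hT.le
  obtain ⟨c, hc⟩ : ∃ c, c = f T - ∫ τ in (0:ℝ)..T, G τ := ⟨_, rfl⟩
  have hf : ∀ x ∈ Ioc 0 T, f x = c * E x + cv E G x := by
    intro x hx
    rw [← eE x hx, hE G (fun x hx => gG.zero hx) x hx]
    have h1 : IntervalIntegrable G volume 0 x := gG.ii hx.1.le
    have h2 : IntervalIntegrable G volume x T := h1.symm.trans iG
    have h3 := intervalIntegral.integral_add_adjacent_intervals h1 h2
    have h4 : ∫ τ in x..T, G τ = f T - f x := by
      apply intervalIntegral.integral_eq_sub_of_hasDerivAt _ h2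
      intro y hy
      rw [uIcc_of_le hx.2] at hy
      have hy0 : 0 < y := lt_of_lt_of_le hx.1 hy.1
      rw [← eG y ⟨hy0, hy.2⟩]
      exact (hf_diff y hy0).hasDerivAt
    linarith
  have gkG := gk.cv gG
  have zh : ∀ x ≤ 0, c * k' x + cv k' G x = 0 := fun x hx => by
    rw [gk.zero hx, gkG.zero hx]; simp
  have hlk : ∀ x ∈ Ioc 0 T, lconv k f x = ∫ τ in (0:ℝ)..x, (c * k' τ + cv k' G τ) := by
    intro x hx
    rw [lconv_eq (F1 := k') (G1 := fun s => c * E s + cv E G s) (fun x hx => gk.zero hx)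
      (fun x hx => by rw [gE.zero hx, (gE.cv gG).zero hx]; simp) ek
      (Eventually.of_forall fun y hy => hf y ⟨hy.1, hy.2.le⟩) hx,
      cv_lin gk gE (gE.cv gG), ← cv_assoc gk gE gG, cv_comm k' E, cv_assoc gE gk gG,
      ← cv_lin gE gk gkG]
    exact hE _ zh x hx
  have ih : IntervalIntegrable (fun τ => c * k' τ + cv k' G τ) volume 0 T :=
    ((gk.ii hT.le).const_mul c).add (gkG.ii hT.le)
  have hd : ∀ᵐ x, x ∈ Ioo 0 T → deriv (lconv k f) x = c * k' x + cv k' G x := by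
    filter_upwards [ih.ae_hasDerivAt_integral] with x hx hx0
    rw [uIcc_of_le hT.le] at hx
    have h1 := hx ⟨hx0.1.le, hx0.2.le⟩ 0 ⟨le_rfl, hT.le⟩
    refine (h1.congr_of_eventuallyEq ?_).deriv
    filter_upwards [Ioo_mem_nhds hx0.1 hx0.2] with y hy
    exact hlk y ⟨hy.1, hy.2.le⟩
  have hTT : T ∈ Ioc 0 T := ⟨hT, le_rfl⟩
  have hKk : ∀ x ∈ Ioc 0 T, 1 = cv K k' x := fun x hx => by
    rw [← lconv_eq (fun x hx => gK.zero hx) (fun x hx => gk.zero hx) eK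
      (Eventually.of_forall fun y hy => ek y ⟨hy.1, hy.2.le⟩) hx, hSonine x hx.1]
  rw [lconv_eq (fun x hx => gK.zero hx) zh eK hd hTT, cv_lin gK gk gkG, ← cv_assoc gK gk gG,
    ← hKk T hTT, ← lconv_eq (F := fun _ => 1) (G := G) (fun x hx => (gK.cv gk).zero hx)
      (fun x hx => gG.zero hx) hKk (by simp) hTT]
  simp [lconv, hc]
end

section
/- First Fundamental Theorem for the GFD of arbitrary order (Riemann–Liouville case): Let n ∈ ℕ and let (κ, k) be a pair of kernels from L_n. Then for every f ∈ C_{−1}(0,∞) and every t > 0, (D_{(k)} I_{(κ)} f)(t) = f(t), i.e. the n-th derivative dⁿ/dtⁿ of the function t ↦ (k * (κ * f))(t) exists and equals f(t). -/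
open Real MeasureTheory Set Filter Topology

noncomputable def PP (p : ℝ) : ℝ → ℝ := fun t => if 0 < t then t ^ p else 0

lemma PP_nonneg (p t : ℝ) : 0 ≤ PP p t := by
  unfold PP; split_ifs with h
  · exact (rpow_pos_of_pos h p).le
  · exact le_rfl

lemma PP_scale (p x t : ℝ) (hx : 0 < x) : PP p t = x ^ p * PP p (t / x) := by
  unfold PP
  by_cases h : 0 < t
  · have h2 : 0 < t / x := div_pos h hx
    rw [if_pos h, if_pos h2, ← mul_rpow hx.le h2.le]
    congr 1; field_simp
  · have h2 : ¬ 0 < t / x := by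
      rw [div_pos_iff_of_pos_right hx]; exact h
    rw [if_neg h, if_neg h2]; simp

lemma PP_one (p q : ℝ) (hp : -1 < p) (hq : -1 < q) :
    Integrable (fun t => PP p t * PP q (1 - t)) := by
  have h := Complex.betaIntegral_convergent (u := ((p + 1 : ℝ) : ℂ)) (v := ((q + 1 : ℝ) : ℂ))
    (by rw [Complex.ofReal_re]; linarith) (by rw [Complex.ofReal_re]; linarith)
  rw [intervalIntegrable_iff_integrableOn_Ioo_of_le zero_le_one] at h
  have h2 := h.norm
  have h3 : IntegrableOn (fun t => PP p t * PP q (1 - t)) (Ioo 0 1) := by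
    refine IntegrableOn.congr_fun h2 ?_ measurableSet_Ioo
    intro t ht
    have h1 : 0 < 1 - t := by linarith [ht.2]
    have e1 : (1 : ℂ) - (t : ℂ) = ((1 - t : ℝ) : ℂ) := by push_cast; rfl
    simp only [norm_mul]
    rw [e1, Complex.norm_cpow_eq_rpow_re_of_pos ht.1, Complex.norm_cpow_eq_rpow_re_of_pos h1]
    simp [PP, ht.1, ht.2]
  rw [← integrableOn_univ]
  refine h3.of_forall_sdiff_eq_zero MeasurableSet.univ ?_
  intro t ht
  by_cases h0 : 0 < t
  · have : ¬ (0 < 1 - t) := fun h => ht.2 ⟨h0, by linarith⟩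
    simp only [PP, if_neg this, mul_zero]
  · simp only [PP, if_neg h0, zero_mul]

lemma PP_zero (p q x : ℝ) (hx : x ≤ 0) (t : ℝ) : PP p t * PP q (x - t) = 0 := by
  by_cases h0 : 0 < t
  · have : ¬ (0 < x - t) := by linarith
    simp only [PP, if_neg this, mul_zero]
  · simp only [PP, if_neg h0, zero_mul]

lemma PP_eq (p q x : ℝ) (hx : 0 < x) : (fun t => PP p t * PP q (x - t)) =
    fun t => (x ^ p * x ^ q) * (fun u => PP p u * PP q (1 - u)) (t / x) := by
  ext t
  rw [PP_scale p x t hx, PP_scale q x (x - t) hx, sub_div, div_self hx.ne']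
  ring

lemma PP_int (p q : ℝ) (hp : -1 < p) (hq : -1 < q) (x : ℝ) :
    Integrable (fun t => PP p t * PP q (x - t)) := by
  rcases le_or_gt x 0 with hx | hx
  · simp only [PP_zero p q x hx]; exact integrable_zero _ _ _
  · rw [PP_eq p q x hx]
    exact ((PP_one p q hp hq).comp_div hx.ne').const_mul _

lemma PP_conv (p q : ℝ) (x : ℝ) :
    ∫ t, PP p t * PP q (x - t) = (∫ t, PP p t * PP q (1 - t)) * PP (p + q + 1) x := by
  rcases le_or_gt x 0 with hx | hx
  · simp only [PP_zero p q x hx]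
    simp [PP, not_lt.2 hx]
  · rw [PP_eq p q x hx, integral_const_mul, Measure.integral_comp_div (fun u => PP p u * PP q (1 - u)) x, abs_of_pos hx]
    simp only [PP, if_pos hx, smul_eq_mul]
    rw [rpow_add hx, rpow_add hx, rpow_one]
    ring

/-- bounded by power, vanishing on the negative axis -/
def PB (F : ℝ → ℝ) : Prop := Integrable F ∧ ∃ p C : ℝ, -1 < p ∧ ∀ t, ‖F t‖ ≤ C * PP p t

lemma PB.zero {F : ℝ → ℝ} (h : PB F) {t : ℝ} (ht : t ≤ 0) : F t = 0 := by
  obtain ⟨_, p, C, _, hb⟩ := h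
  have := hb t
  simpa [PP, not_lt.2 ht] using this

lemma PB.nn {F : ℝ → ℝ} (h : PB F) : PB (fun t => ‖F t‖) := by
  obtain ⟨hi, p, C, hp, hb⟩ := h
  exact ⟨hi.norm, p, C, hp, fun t => by simpa using hb t⟩

lemma PB.exists {F G : ℝ → ℝ} (hF : PB F) (hG : PB G) (x : ℝ) :
    Integrable (fun t => F t * G (x - t)) := by
  obtain ⟨hi, p, C, hp, hb⟩ := hF
  obtain ⟨hi', q, D, hq, hb'⟩ := hG
  refine ((PP_int p q hp hq x).const_mul (C * D)).mono'
    (hi.aestronglyMeasurable.mul (hi'.comp_sub_left x).aestronglyMeasurable) ?_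
  refine Eventually.of_forall fun t => ?_
  rw [norm_mul]
  calc _ ≤ (C * PP p t) * (D * PP q (x - t)) :=
        mul_le_mul (hb t) (hb' _) (norm_nonneg _) ((norm_nonneg _).trans (hb t))
    _ = _ := by ring

lemma PB.conv {F G : ℝ → ℝ} (hF : PB F) (hG : PB G) :
    PB (convolution F G (ContinuousLinearMap.mul ℝ ℝ) volume) := by
  refine ⟨hF.1.integrable_convolution _ hG.1, ?_⟩
  have hE := fun x => (hF.exists hG x)
  obtain ⟨hi, p, C, hp, hb⟩ := hF
  obtain ⟨hi', q, D, hq, hb'⟩ := hG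
  refine ⟨p + q + 1, C * D * (∫ t, PP p t * PP q (1 - t)), by linarith, fun x => ?_⟩
  rw [mul_assoc, ← PP_conv, ← integral_const_mul]
  simp only [convolution_def, ContinuousLinearMap.mul_apply']
  refine (norm_integral_le_integral_norm _).trans ?_
  refine integral_mono (hE x).norm ((PP_int p q hp hq x).const_mul (C * D)) fun t => ?_
  simp only [norm_mul]
  calc _ ≤ (C * PP p t) * (D * PP q (x - t)) :=
        mul_le_mul (hb t) (hb' _) (norm_nonneg _) ((norm_nonneg _).trans (hb t))
    _ = _ := by ring

lemma PB.assoc {F G H : ℝ → ℝ} (hF : PB F) (hG : PB G) (hH : PB H) (x : ℝ) :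
    convolution (convolution F G (ContinuousLinearMap.mul ℝ ℝ) volume) H
      (ContinuousLinearMap.mul ℝ ℝ) volume x =
    convolution F (convolution G H (ContinuousLinearMap.mul ℝ ℝ) volume)
      (ContinuousLinearMap.mul ℝ ℝ) volume x := by
  refine convolution_assoc _ _ _ _ (fun a b c => by simp [mul_assoc]) hF.1.aestronglyMeasurable
    hG.1.aestronglyMeasurable hH.1.aestronglyMeasurable
    (Eventually.of_forall fun y => hF.exists hG y)
    (Eventually.of_forall fun y => hG.nn.exists hH.nn y)
    (hF.nn.exists (hG.nn.conv hH.nn) x)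

lemma Cm1.cont {f : ℝ → ℝ} (hf : Cm1 f) : ContinuousOn f (Ioi 0) := by
  obtain ⟨p, hp, f₁, hc, he⟩ := hf
  refine ContinuousOn.congr (f := fun t => t ^ p * f₁ t) ?_ (fun t ht => he t ht)
  refine ContinuousOn.mul ?_ (hc.mono Ioi_subset_Ici_self)
  exact fun t ht => (continuousAt_rpow_const t p (Or.inl (ne_of_gt ht))).continuousWithinAt

lemma Cm1.trunc {f : ℝ → ℝ} (hf : Cm1 f) (T : ℝ) : PB (indicator (Ioc 0 T) f) := by
  have hcont := hf.cont
  obtain ⟨p, hp, f₁, hc, he⟩ := hf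
  obtain ⟨C, hC⟩ := (isCompact_Icc (a := (0:ℝ)) (b := T)).exists_bound_of_continuousOn
    (hc.mono Icc_subset_Ici_self)
  have hb : ∀ t ∈ Ioc 0 T, ‖f t‖ ≤ |C| * t ^ p := by
    intro t ht
    rw [he t ht.1, norm_mul, mul_comm, norm_of_nonneg (rpow_pos_of_pos ht.1 p).le]
    exact mul_le_mul_of_nonneg_right ((hC t ⟨ht.1.le, ht.2⟩).trans (le_abs_self C))
      (rpow_pos_of_pos ht.1 p).le
  constructor
  · rw [integrable_indicator_iff measurableSet_Ioc]
    have h1 : IntegrableOn (fun t : ℝ => |C| * t ^ p) (Ioc 0 T) := by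
      rcases le_or_gt T 0 with h | h
      · simp [Ioc_eq_empty (not_lt.2 h)]
      · exact ((intervalIntegrable_iff_integrableOn_Ioc_of_le h.le).1
          (intervalIntegral.intervalIntegrable_rpow' hp)).const_mul _
    refine Integrable.mono' h1 ((hcont.mono Ioc_subset_Ioi_self).aestronglyMeasurable
      measurableSet_Ioc) ?_
    exact (ae_restrict_iff' measurableSet_Ioc).2 (Eventually.of_forall hb)
  · refine ⟨p, |C|, hp, fun t => ?_⟩
    by_cases h : t ∈ Ioc 0 T
    · rw [indicator_of_mem h]
      simpa [PP, h.1] using hb t h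
    · rw [indicator_of_notMem h, norm_zero]
      exact mul_nonneg (abs_nonneg _) (PP_nonneg p t)

lemma lconv_eq_s11 {f g F G : ℝ → ℝ} {x : ℝ} (hx : 0 < x) (hF : PB F) (hG : PB G)
    (hf : ∀ t ∈ Ioo 0 x, f t = F t) (hg : ∀ t ∈ Ioo 0 x, g t = G t) :
    lconv f g x = convolution G F (ContinuousLinearMap.mul ℝ ℝ) volume x := by
  unfold lconv
  rw [intervalIntegral.integral_of_le hx.le, integral_Ioc_eq_integral_Ioo]
  simp only [convolution_def, ContinuousLinearMap.mul_apply']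
  rw [← setIntegral_eq_integral_of_forall_compl_eq_zero (s := Ioo 0 x)
    (f := fun t => G t * F (x - t))]
  · refine setIntegral_congr_fun measurableSet_Ioo fun t ht => ?_
    rw [hf (x - t) ⟨by linarith [ht.2], by linarith [ht.1]⟩, hg t ht, mul_comm]
  · intro t ht
    by_cases h0 : 0 < t
    · have : x - t ≤ 0 := by
        by_contra h
        exact ht ⟨h0, by linarith⟩
      rw [hF.zero this, mul_zero]
    · rw [hG.zero (not_lt.1 h0), zero_mul]

lemma lconv_assoc {f g h : ℝ → ℝ} (hf : Cm1 f) (hg : Cm1 g) (hh : Cm1 h) {x : ℝ} (hx : 0 < x) :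
    lconv f (lconv g h) x = lconv (lconv f g) h x := by
  have e : ∀ u : ℝ → ℝ, ∀ t ∈ Ioo 0 x, u t = indicator (Ioc 0 x) u t := fun u t ht => by
    rw [indicator_of_mem (Ioo_subset_Ioc_self ht)]
  have e2 : ∀ u : ℝ → ℝ, ∀ y ∈ Ioo 0 x, ∀ t ∈ Ioo 0 y, u t = indicator (Ioc 0 x) u t :=
    fun u y hy t ht => e u t ⟨ht.1, ht.2.trans hy.2⟩
  rw [lconv_eq_s11 hx (hf.trunc x) ((hh.trunc x).conv (hg.trunc x)) (e f)
      (fun y hy => lconv_eq_s11 hy.1 (hg.trunc x) (hh.trunc x) (e2 g y hy) (e2 h y hy)),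
    lconv_eq_s11 hx ((hg.trunc x).conv (hf.trunc x)) (hh.trunc x)
      (fun y hy => lconv_eq_s11 hy.1 (hf.trunc x) (hg.trunc x) (e2 f y hy) (e2 g y hy)) (e h),
    PB.assoc (hh.trunc x) (hg.trunc x) (hf.trunc x)]

lemma lconv_comm (f g : ℝ → ℝ) (x : ℝ) : lconv f g x = lconv g f x := by
  unfold lconv
  have := intervalIntegral.integral_comp_sub_left (a := 0) (b := x)
    (fun τ => g (x - τ) * f τ) x
  simp only [sub_sub_cancel, sub_zero, sub_self] at this
  rw [← this]
  congr 1; ext t; ring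

lemma lconv_congr {f f' g g' : ℝ → ℝ} {x : ℝ} (hx : 0 < x) (hf : ∀ t, 0 < t → f t = f' t)
    (hg : ∀ t, 0 < t → g t = g' t) : lconv f g x = lconv f' g' x := by
  unfold lconv
  rw [intervalIntegral.integral_of_le hx.le, intervalIntegral.integral_of_le hx.le,
    integral_Ioc_eq_integral_Ioo, integral_Ioc_eq_integral_Ioo]
  refine setIntegral_congr_fun measurableSet_Ioo fun t ht => ?_
  rw [hf (x - t) (by linarith [ht.2]), hg t ht.1]

lemma Cm1_pow (m : ℕ) : Cm1 (fun t => t ^ m / m.factorial) := by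
  refine ⟨0, by norm_num, fun t => t ^ m / m.factorial, by fun_prop, fun t _ => by simp⟩

/-- iterated primitive -/
noncomputable def KK (f : ℝ → ℝ) : ℕ → ℝ → ℝ
  | 0 => f
  | m + 1 => fun t => ∫ s in (0:ℝ)..t, KK f m s

lemma KK_good {f : ℝ → ℝ} (hf : Cm1 f) (m : ℕ) :
    ContinuousOn (KK f m) (Ioi 0) ∧ ∀ t, 0 < t → IntervalIntegrable (KK f m) volume 0 t := by
  have key : ∀ g : ℝ → ℝ, (∀ t, 0 < t → IntervalIntegrable g volume 0 t) →
      ∀ T, 0 < T → ContinuousOn (fun t => ∫ s in (0:ℝ)..t, g s) (Icc 0 T) := by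
    intro g hg T hT
    have := intervalIntegral.continuousOn_primitive_interval' (hg T hT) left_mem_uIcc
    rwa [uIcc_of_le hT.le] at this
  induction m with
  | zero =>
    refine ⟨hf.cont, fun t ht => ?_⟩
    rw [intervalIntegrable_iff_integrableOn_Ioc_of_le ht.le,
      ← integrable_indicator_iff measurableSet_Ioc]
    exact (hf.trunc t).1
  | succ m ih =>
    refine ⟨fun t ht => ?_, fun t ht => ?_⟩
    · have ht : 0 < t := ht
      exact ((key _ ih.2 (t + 1) (by linarith)).continuousAt
        (Icc_mem_nhds ht (by linarith))).continuousWithinAt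
    · refine ContinuousOn.intervalIntegrable ?_
      rw [uIcc_of_le ht.le]
      exact key _ ih.2 t ht

lemma KK_deriv {f : ℝ → ℝ} (hf : Cm1 f) (m : ℕ) {t : ℝ} (ht : 0 < t) :
    HasDerivAt (KK f (m + 1)) (KK f m t) t := by
  obtain ⟨hc, hi⟩ := KK_good hf m
  refine intervalIntegral.integral_hasDerivAt_right (hi t ht) ?_
    (hc.continuousAt (Ioi_mem_nhds ht))
  exact hc.stronglyMeasurableAtFilter isOpen_Ioi t ht

lemma KK_eq {f : ℝ → ℝ} (hf : Cm1 f) (m : ℕ) : ∀ t, 0 < t →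
    KK f (m + 1) t = lconv (fun t => t ^ m / m.factorial) f t := by
  induction m with
  | zero => intro t ht; simp [KK, lconv]
  | succ m ih =>
    intro t ht
    have h1 : KK f (m + 1 + 1) t = lconv (fun t => t ^ 0 / (Nat.factorial 0)) (KK f (m + 1)) t := by
      rw [KK]; simp [lconv]
    rw [h1, lconv_congr ht (fun _ _ => rfl) ih, lconv_assoc (Cm1_pow 0) (Cm1_pow m) hf ht]
    refine lconv_congr ht (fun s hs => ?_) (fun _ _ => rfl)
    simp only [lconv, pow_zero, Nat.factorial_zero, Nat.cast_one, div_one, one_mul]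
    rw [intervalIntegral.integral_div, integral_pow, Nat.factorial_succ]
    push_cast
    have : (m.factorial : ℝ) ≠ 0 := by positivity
    field_simp
    simp

/-- First Fundamental Theorem for the GFD of arbitrary order,
Riemann-Liouville case: for a pair `(κ, k) ∈ L_n` and `f ∈ C_{-1}(0,∞)`, the `n`-th
derivative of `k * (κ * f)` exists on `(0,∞)` and equals `f`. -/
theorem statement11 (n : ℕ) (hn : 1 ≤ n) (κ k : ℝ → ℝ)
    (hκ : Cm1 κ) (hk : Cm10 k)
    (hL : ∀ t : ℝ, 0 < t → lconv κ k t = t ^ (n - 1) / (n - 1).factorial)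
    (f : ℝ → ℝ) (hf : Cm1 f) :
    (∀ j < n, ∀ t : ℝ, 0 < t →
        DifferentiableAt ℝ (iteratedDeriv j (lconv k (lconv κ f))) t) ∧
      ∀ t : ℝ, 0 < t → iteratedDeriv n (lconv k (lconv κ f)) t = f t := by
  have hk1 : Cm1 k := by
    obtain ⟨p, h1, _, h⟩ := hk
    exact ⟨p, h1, h⟩
  have hmain : ∀ t, 0 < t → lconv k (lconv κ f) t = KK f n t := by
    intro t ht
    rw [lconv_assoc hk1 hκ hf ht]
    obtain ⟨m, rfl⟩ : ∃ m, n = m + 1 := ⟨n - 1, by omega⟩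
    rw [KK_eq hf m t ht]
    refine lconv_congr ht (fun s hs => ?_) (fun _ _ => rfl)
    rw [lconv_comm, hL s hs]
    simp
  have hiter : ∀ j ≤ n, ∀ t, 0 < t → iteratedDeriv j (lconv k (lconv κ f)) t = KK f (n - j) t := by
    intro j
    induction j with
    | zero => intro _ t ht; simpa using hmain t ht
    | succ j ih =>
      intro hj t ht
      rw [iteratedDeriv_succ]
      have he : iteratedDeriv j (lconv k (lconv κ f)) =ᶠ[𝓝 t] KK f (n - (j + 1) + 1) := by
        filter_upwards [Ioi_mem_nhds ht] with s hs
        rw [ih (by omega) s hs]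
        congr 1; omega
      rw [he.deriv_eq]
      exact (KK_deriv hf _ ht).deriv
  refine ⟨fun j hj t ht => ?_, fun t ht => ?_⟩
  · have he : iteratedDeriv j (lconv k (lconv κ f)) =ᶠ[𝓝 t] KK f (n - (j + 1) + 1) := by
      filter_upwards [Ioi_mem_nhds ht] with s hs
      rw [hiter j hj.le s hs]
      congr 1; omega
    exact (KK_deriv hf _ ht).differentiableAt.congr_of_eventuallyEq he
  · rw [hiter n le_rfl t ht, Nat.sub_self]; rfl
end

section
/- First Fundamental Theorem for the GFD of arbitrary order (Caputo case): Let n ∈ ℕ and let (κ, k) be a pair of kernels from L_n. Then for every f ∈ C_{−1,k}(0,∞), i.e. every f of the form f = k * φ with φ ∈ C_{−1}(0,∞), and every t > 0, (∗D_{(k)} I_{(κ)} f)(t) = f(t). -/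
open Real MeasureTheory Set Filter Topology

/-- Precise version of the class with a globally continuous regular factor. -/
def CpX (p : ℝ) (f : ℝ → ℝ) : Prop :=
  ∃ f₁ : ℝ → ℝ, Continuous f₁ ∧ ∀ t : ℝ, 0 < t → f t = t ^ p * f₁ t

lemma CpX_of {p : ℝ} {f f₁ : ℝ → ℝ} (h : ContinuousOn f₁ (Set.Ici 0))
    (h2 : ∀ t : ℝ, 0 < t → f t = t ^ p * f₁ t) : CpX p f := by
  refine ⟨fun t => f₁ (max t 0), ?_, ?_⟩
  · exact h.comp_continuous (by fun_prop) (fun x => by simp)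
  · intro t ht
    simp only [h2 t ht, max_eq_left ht.le]

lemma CpX.abs {p : ℝ} {f : ℝ → ℝ} (h : CpX p f) : CpX p (fun x => ‖f x‖) := by
  obtain ⟨f₁, hc, h⟩ := h
  refine ⟨fun x => ‖f₁ x‖, by fun_prop, fun t ht => ?_⟩
  simp only [h t ht, norm_mul]
  rw [Real.norm_of_nonneg (Real.rpow_nonneg ht.le p)]

lemma CpX.contOn {p : ℝ} {f : ℝ → ℝ} (h : CpX p f) : ContinuousOn f (Ioi 0) := by
  obtain ⟨f₁, hc, h⟩ := h
  have : ContinuousOn (fun t : ℝ => t ^ p * f₁ t) (Ioi 0) := by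
    apply ContinuousOn.mul _ hc.continuousOn
    intro x hx
    exact (Real.continuousAt_rpow_const x p (Or.inl (ne_of_gt hx))).continuousWithinAt
  exact this.congr (fun t ht => h t ht)

lemma CpX.congr {p : ℝ} {f g : ℝ → ℝ} (h : CpX p f) (hg : ∀ t, 0 < t → g t = f t) :
    CpX p g := by
  obtain ⟨f₁, hc, h⟩ := h
  exact ⟨f₁, hc, fun t ht => by rw [hg t ht, h t ht]⟩

lemma beta_int_s12 {p q : ℝ} (hp : -1 < p) (hq : -1 < q) :
    IntervalIntegrable (fun s : ℝ => (1 - s) ^ p * s ^ q) volume 0 1 := by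
  have := (Complex.betaIntegral_convergent (u := ((q + 1 : ℝ) : ℂ)) (v := ((p + 1 : ℝ) : ℂ))
    (by simp; linarith) (by simp; linarith)).norm
  refine this.congr_uIoo ?_
  rw [uIoo_of_le zero_le_one]
  intro s hs
  have h1 : (0:ℝ) < 1 - s := by linarith [hs.2]
  simp only [norm_mul]
  rw [Complex.norm_cpow_eq_rpow_re_of_pos hs.1,
    show (1 - (s:ℂ)) = ((1 - s : ℝ) : ℂ) by push_cast; rfl,
    Complex.norm_cpow_eq_rpow_re_of_pos h1]
  simp [mul_comm]

lemma beta_int2 {p q : ℝ} (hp : -1 < p) (hq : -1 < q) {u : ℝ → ℝ} (hu : Continuous u) :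
    IntervalIntegrable (fun s : ℝ => (1 - s) ^ p * s ^ q * u s) volume 0 1 :=
  (beta_int_s12 hp hq).mul_continuousOn hu.continuousOn

lemma scale_eq {p q : ℝ} {a b a₁ b₁ : ℝ → ℝ}
    (ha : ∀ t : ℝ, 0 < t → a t = t ^ p * a₁ t) (hb : ∀ t : ℝ, 0 < t → b t = t ^ q * b₁ t)
    {t s : ℝ} (ht : 0 < t) (hs : s ∈ Ioo (0:ℝ) 1) :
    a (t - t * s) * b (t * s) =
      t ^ (p + q) * ((1 - s) ^ p * s ^ q * (a₁ (t * (1 - s)) * b₁ (t * s))) := by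
  have h1 : (0:ℝ) < 1 - s := by linarith [hs.2]
  rw [show t - t * s = t * (1 - s) by ring, ha _ (mul_pos ht h1), hb _ (mul_pos ht hs.1),
    Real.mul_rpow ht.le h1.le, Real.mul_rpow ht.le hs.1.le, Real.rpow_add ht]
  ring

lemma lconv_int {p q : ℝ} (hp : -1 < p) (hq : -1 < q) {a b : ℝ → ℝ}
    (ha : CpX p a) (hb : CpX q b) {t : ℝ} (ht : 0 < t) :
    IntervalIntegrable (fun τ => a (t - τ) * b τ) volume 0 t := by
  obtain ⟨a₁, hac, ha⟩ := ha
  obtain ⟨b₁, hbc, hb⟩ := hb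
  have h := (beta_int2 hp hq (u := fun s => a₁ (t * (1 - s)) * b₁ (t * s))
    (by fun_prop)).const_mul (t ^ (p + q))
  have h2 : IntervalIntegrable (fun s => a (t - t * s) * b (t * s)) volume 0 1 := by
    refine h.congr_uIoo ?_
    rw [uIoo_of_le zero_le_one]
    intro s hs
    exact (scale_eq ha hb ht hs).symm
  have h3 := h2.comp_mul_left (c := t⁻¹)
  have e : ∀ x, t * (t⁻¹ * x) = x := fun x => by field_simp
  simpa [e] using h3

lemma lconv_CpX {p q : ℝ} (hp : -1 < p) (hq : -1 < q) {a b : ℝ → ℝ}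
    (ha : CpX p a) (hb : CpX q b) : CpX (p + q + 1) (lconv a b) := by
  obtain ⟨a₁, hac, ha⟩ := ha
  obtain ⟨b₁, hbc, hb⟩ := hb
  refine ⟨fun t => ∫ s in (0:ℝ)..1, (1 - s) ^ p * s ^ q * (a₁ (t * (1 - s)) * b₁ (t * s)), ?_, ?_⟩
  · rw [continuous_iff_continuousAt]
    intro t₀
    set R := |t₀| + 1 with hR
    obtain ⟨A, hA⟩ := (isCompact_Icc (a := -R) (b := R)).exists_bound_of_continuousOn
      hac.continuousOn
    obtain ⟨B, hB⟩ := (isCompact_Icc (a := -R) (b := R)).exists_bound_of_continuousOn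
      hbc.continuousOn
    refine intervalIntegral.continuousAt_of_dominated_interval
      (bound := fun s => (1 - s) ^ p * s ^ q * (A * B)) ?_ ?_ ((beta_int_s12 hp hq).mul_const _) ?_
    · refine Eventually.of_forall fun t => ?_
      have := beta_int2 hp hq (u := fun s => a₁ (t * (1 - s)) * b₁ (t * s)) (by fun_prop)
      rw [uIoc_of_le zero_le_one]
      exact this.1.aestronglyMeasurable
    · filter_upwards [Metric.ball_mem_nhds t₀ one_pos] with t ht
      refine Eventually.of_forall fun s hs => ?_
      rw [uIoc_of_le zero_le_one] at hs
      have hs1 : (0:ℝ) ≤ 1 - s := by linarith [hs.2]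
      have htR : |t| ≤ R := by
        rw [Metric.mem_ball, Real.dist_eq] at ht
        have := abs_sub_abs_le_abs_sub t t₀
        linarith
      have key : ∀ r : ℝ, 0 ≤ r → r ≤ 1 → t * r ∈ Icc (-R) R := by
        intro r h0 h1
        rw [mem_Icc, ← abs_le, abs_mul, abs_of_nonneg h0]
        nlinarith [abs_nonneg t]
      have k1 := hA _ (key (1 - s) hs1 (by linarith [hs.1]))
      have k2 := hB _ (key s hs.1.le hs.2)
      have k0 : 0 ≤ (1 - s) ^ p * s ^ q :=
        mul_nonneg (Real.rpow_nonneg hs1 p) (Real.rpow_nonneg hs.1.le q)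
      rw [norm_mul, norm_mul (a₁ _), Real.norm_of_nonneg k0]
      have : 0 ≤ A := (norm_nonneg _).trans k1
      gcongr
    · refine Eventually.of_forall fun s _ => ?_
      fun_prop
  · intro t ht
    unfold lconv
    have := intervalIntegral.mul_integral_comp_mul_left (a := 0) (b := 1) (c := t)
      (f := fun τ => a (t - τ) * b τ)
    rw [mul_zero, mul_one] at this
    rw [← this, intervalIntegral.integral_congr_Ioo_of_le zero_le_one
      (fun s hs => scale_eq ha hb ht hs), intervalIntegral.integral_const_mul,
      Real.rpow_add ht (p + q), Real.rpow_one]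
    ring

lemma lconv_congr_s12 {a b a' b' : ℝ → ℝ} (ha : ∀ t, 0 < t → a t = a' t)
    (hb : ∀ t, 0 < t → b t = b' t) {t : ℝ} (ht : 0 < t) : lconv a b t = lconv a' b' t := by
  unfold lconv
  refine intervalIntegral.integral_congr_Ioo_of_le ht.le fun s hs => ?_
  show a (t - s) * b s = a' (t - s) * b' s
  rw [ha _ (sub_pos.2 hs.2), hb _ hs.1]

lemma lconv_comm_s12 (a b : ℝ → ℝ) (t : ℝ) : lconv a b t = lconv b a t := by
  unfold lconv
  have := intervalIntegral.integral_comp_sub_left (a := 0) (b := t)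
    (fun τ => a (t - τ) * b τ) t
  simp only [sub_sub_cancel, sub_zero, sub_self] at this
  rw [← this]
  simp [mul_comm]

lemma ind_eq {a b : ℝ → ℝ} (x : ℝ) :
    (fun t => (ContinuousLinearMap.mul ℝ ℝ) ((Ioi (0:ℝ)).indicator b t)
      ((Ioi (0:ℝ)).indicator a (x - t))) =
    (Ioo 0 x).indicator (fun τ => a (x - τ) * b τ) := by
  ext t
  simp only [ContinuousLinearMap.mul_apply', indicator, mem_Ioi, mem_Ioo, sub_pos]
  split_ifs <;> simp_all [mul_comm]

lemma conv_eq {a b : ℝ → ℝ} (x : ℝ) :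
    convolution ((Ioi (0:ℝ)).indicator b) ((Ioi (0:ℝ)).indicator a)
      (ContinuousLinearMap.mul ℝ ℝ) volume x = (Ioi (0:ℝ)).indicator (lconv a b) x := by
  rw [convolution_def, ind_eq, integral_indicator measurableSet_Ioo]
  by_cases hx : 0 < x
  · rw [indicator_of_mem (by exact hx), lconv, intervalIntegral.integral_of_le hx.le,
      integral_Ioc_eq_integral_Ioo]
  · rw [indicator_of_notMem (by exact hx), Ioo_eq_empty hx]
    simp

lemma conv_ex {p q : ℝ} (hp : -1 < p) (hq : -1 < q) {a b : ℝ → ℝ}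
    (ha : CpX p a) (hb : CpX q b) (x : ℝ) :
    ConvolutionExistsAt ((Ioi (0:ℝ)).indicator b) ((Ioi (0:ℝ)).indicator a) x
      (ContinuousLinearMap.mul ℝ ℝ) volume := by
  unfold ConvolutionExistsAt
  rw [ind_eq, integrable_indicator_iff measurableSet_Ioo]
  by_cases hx : 0 < x
  · exact (lconv_int hp hq ha hb hx).1.mono_set Ioo_subset_Ioc_self
  · rw [Ioo_eq_empty hx]
    simp

lemma ind_meas {p : ℝ} {a : ℝ → ℝ} (ha : CpX p a) :
    AEStronglyMeasurable ((Ioi (0:ℝ)).indicator a) volume := by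
  rw [aestronglyMeasurable_indicator_iff measurableSet_Ioi]
  exact ha.contOn.aestronglyMeasurable measurableSet_Ioi

lemma ind_norm (a : ℝ → ℝ) : (fun x => ‖(Ioi (0:ℝ)).indicator a x‖) =
    (Ioi (0:ℝ)).indicator (fun x => ‖a x‖) := by
  ext x
  exact norm_indicator_eq_indicator_norm a x

lemma lconv_assoc_s12 {p q r : ℝ} (hp : -1 < p) (hq : -1 < q) (hr : -1 < r) {a b c : ℝ → ℝ}
    (ha : CpX p a) (hb : CpX q b) (hc : CpX r c) {t : ℝ} (ht : 0 < t) :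
    lconv a (lconv b c) t = lconv (lconv a b) c t := by
  have h := convolution_assoc (μ := volume) (ν := volume) (𝕜 := ℝ)
    (ContinuousLinearMap.mul ℝ ℝ) (ContinuousLinearMap.mul ℝ ℝ)
    (ContinuousLinearMap.mul ℝ ℝ) (ContinuousLinearMap.mul ℝ ℝ)
    (f := (Ioi (0:ℝ)).indicator c) (g := (Ioi (0:ℝ)).indicator b)
    (k := (Ioi (0:ℝ)).indicator a) (x₀ := t)
    (fun x y z => by simp [mul_assoc]) (ind_meas hc) (ind_meas hb) (ind_meas ha)
    (Eventually.of_forall fun x => conv_ex hq hr hb hc x)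
    (Eventually.of_forall fun x => by
      simp only [ind_norm]
      exact conv_ex hp hq ha.abs hb.abs x)
    (by
      simp only [ind_norm]
      rw [show convolution _ _ _ _ = _ from funext fun x => conv_eq x]
      exact conv_ex (by linarith) hr (lconv_CpX hp hq ha.abs hb.abs) hc.abs t)
  rw [show convolution ((Ioi (0:ℝ)).indicator c) _ _ _ = _ from funext fun x => conv_eq x,
    show convolution ((Ioi (0:ℝ)).indicator b) _ _ _ = _ from funext fun x => conv_eq x,
    conv_eq, conv_eq, indicator_of_mem (by exact ht), indicator_of_mem (by exact ht)] at h
  exact h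

/-- The kernels `t^m/m!`. -/
noncomputable def HH (m : ℕ) : ℝ → ℝ := fun t => t ^ m / m.factorial

lemma HH_CpX (m : ℕ) : CpX 0 (HH m) :=
  ⟨HH m, by unfold HH; fun_prop, fun t ht => by simp⟩

lemma HH_succ (m : ℕ) (t : ℝ) : HH (m + 1) t = lconv (HH 0) (HH m) t := by
  simp only [lconv, HH, pow_zero, Nat.factorial_zero, Nat.cast_one, div_one, one_mul]
  rw [intervalIntegral.integral_div, integral_pow, Nat.factorial_succ]
  push_cast
  field_simp
  simp

lemma HH0_deriv {q : ℝ} (hq : -1 < q) {ψ : ℝ → ℝ} (hψ : CpX q ψ) {t : ℝ} (ht : 0 < t) :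
    HasDerivAt (lconv (HH 0) ψ) (ψ t) t := by
  have e : lconv (HH 0) ψ = fun u => ∫ x in (0:ℝ)..u, ψ x := by
    ext u
    simp [lconv, HH]
  rw [e]
  apply intervalIntegral.integral_hasDerivAt_right
  · have := lconv_int (by norm_num) hq (HH_CpX 0) hψ ht
    simpa [HH] using this
  · exact hψ.contOn.stronglyMeasurableAtFilter isOpen_Ioi t ht
  · exact hψ.contOn.continuousAt (Ioi_mem_nhds ht)

lemma HH_deriv {q : ℝ} (hq : -1 < q) {ψ : ℝ → ℝ} (hψ : CpX q ψ) (m : ℕ) {t : ℝ} (ht : 0 < t) :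
    HasDerivAt (lconv (HH (m + 1)) ψ) (lconv (HH m) ψ t) t := by
  refine (HH0_deriv (by linarith) (lconv_CpX (by norm_num) hq (HH_CpX m) hψ) ht).congr_of_eventuallyEq ?_
  filter_upwards [Ioi_mem_nhds ht] with u hu
  rw [lconv_assoc_s12 (by norm_num) (by norm_num) hq (HH_CpX 0) (HH_CpX m) hψ hu]
  exact lconv_congr_s12 (fun s _ => HH_succ m s) (fun _ _ => rfl) hu

lemma iter_eq {q : ℝ} (hq : -1 < q) {ψ G : ℝ → ℝ} (hψ : CpX q ψ) (N : ℕ)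
    (hG : ∀ t, 0 < t → G t = lconv (HH N) ψ t) (j m : ℕ) (hjm : j + m = N) :
    ∀ t, 0 < t → iteratedDeriv j G t = lconv (HH m) ψ t := by
  induction j generalizing m with
  | zero =>
    intro t ht
    obtain rfl : m = N := by omega
    simpa using hG t ht
  | succ j ih =>
    intro t ht
    rw [iteratedDeriv_succ]
    refine HasDerivAt.deriv ((HH_deriv hq hψ m ht).congr_of_eventuallyEq ?_)
    filter_upwards [Ioi_mem_nhds ht] with u hu
    exact ih (m + 1) (by omega) u hu

lemma iter_hasDeriv {q : ℝ} (hq : -1 < q) {ψ G : ℝ → ℝ} (hψ : CpX q ψ) (N : ℕ)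
    (hG : ∀ t, 0 < t → G t = lconv (HH N) ψ t) (j : ℕ) (hj : j ≤ N) {t : ℝ} (ht : 0 < t) :
    ∃ d, HasDerivAt (iteratedDeriv j G) d t ∧ (j = N → d = ψ t) := by
  obtain ⟨m, hm⟩ := Nat.exists_eq_add_of_le hj
  have h := iter_eq hq hψ N hG j m hm.symm
  have hev : iteratedDeriv j G =ᶠ[𝓝 t] lconv (HH m) ψ := by
    filter_upwards [Ioi_mem_nhds ht] with u hu
    exact h u hu
  cases m with
  | zero => exact ⟨_, (HH0_deriv hq hψ ht).congr_of_eventuallyEq hev, fun _ => rfl⟩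
  | succ m =>
    exact ⟨_, (HH_deriv hq hψ m ht).congr_of_eventuallyEq hev, fun h => by omega⟩

lemma HH_lim {q : ℝ} (hq : -1 < q) {ψ : ℝ → ℝ} (hψ : CpX q ψ) (m : ℕ) :
    Tendsto (lconv (HH m) ψ) (𝓝[>] 0) (𝓝 0) := by
  obtain ⟨F, hF, h⟩ := lconv_CpX (by norm_num) hq (HH_CpX m) hψ
  have h1 : Continuous (fun t : ℝ => t ^ (0 + q + 1) * F t) :=
    (Real.continuous_rpow_const (by linarith)).mul hF
  have h2 := h1.tendsto 0
  simp only [Real.zero_rpow (show 0 + q + 1 ≠ 0 by linarith), zero_mul] at h2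
  refine (h2.mono_left nhdsWithin_le_nhds).congr' ?_
  filter_upwards [self_mem_nhdsWithin] with t ht
  exact (h t ht).symm

/-- First Fundamental Theorem for the GFD of arbitrary order, Caputo case:
for a pair `(κ, k) ∈ L_n` and `f ∈ C_{-1,k}(0,∞)`, i.e. `f = k * φ` with `φ ∈ C_{-1}(0,∞)`,
one has `(∗D_{(k)} I_{(κ)} f)(t) = f(t)` for all `t > 0`, where
`(∗D_{(k)} g)(t) = dⁿ/dtⁿ (k * [g(·) - ∑_{j<n} g^{(j)}(0) h_{j+1}(·)])(t)` and
`g^{(j)}(0) = c j` denotes the limit of `g^{(j)}` at `0+` for `g = κ * f`. -/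
theorem statement12 (n : ℕ) (hn : 1 ≤ n) (κ k : ℝ → ℝ)
    (hκ : Cm1 κ) (hk : Cm10 k)
    (hL : ∀ t : ℝ, 0 < t → lconv κ k t = t ^ (n - 1) / (n - 1).factorial)
    (f φ : ℝ → ℝ) (hφ : Cm1 φ)
    (hf : ∀ t : ℝ, 0 < t → f t = lconv k φ t)
    (c : ℕ → ℝ)
    (hc : ∀ j < n, Filter.Tendsto (iteratedDeriv j (lconv κ f))
      (nhdsWithin 0 (Set.Ioi 0)) (nhds (c j))) :
    (∀ m < n, ∀ t : ℝ, 0 < t →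
        DifferentiableAt ℝ
          (iteratedDeriv m (lconv k (fun u =>
            lconv κ f u - ∑ j ∈ Finset.range n, c j * u ^ j / j.factorial))) t) ∧
      ∀ t : ℝ, 0 < t →
        iteratedDeriv n (lconv k (fun u =>
          lconv κ f u - ∑ j ∈ Finset.range n, c j * u ^ j / j.factorial)) t = f t := by
  obtain ⟨p, hp, κ₁, hκc, hκe⟩ := hκ
  obtain ⟨q, hq, -, k₁, hkc, hke⟩ := hk
  obtain ⟨r, hr, φ₁, hφc, hφe⟩ := hφ
  have hκ := CpX_of hκc hκe
  have hk := CpX_of hkc hke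
  have hφ := CpX_of hφc hφe
  have hfC : CpX (q + r + 1) f := (lconv_CpX hq hr hk hφ).congr hf
  have hs : -1 < q + r + 1 := by linarith
  have hG : ∀ t, 0 < t → lconv κ f t = lconv (HH (n - 1)) φ t := by
    intro t ht
    rw [lconv_congr_s12 (fun _ _ => rfl) hf ht, lconv_assoc_s12 hp hq hr hκ hk hφ ht]
    exact lconv_congr_s12 hL (fun _ _ => rfl) ht
  have hc0 : ∀ j < n, c j = 0 := by
    intro j hj
    have h := iter_eq hr hφ (n - 1) hG j (n - 1 - j) (by omega)
    refine tendsto_nhds_unique (hc j hj) ((HH_lim hr hφ (n - 1 - j)).congr' ?_)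
    filter_upwards [self_mem_nhdsWithin] with t ht
    exact (h t ht).symm
  have hfun : (fun u => lconv κ f u - ∑ j ∈ Finset.range n, c j * u ^ j / j.factorial)
      = lconv κ f := by
    ext u
    rw [Finset.sum_eq_zero, sub_zero]
    intro j hj
    simp [hc0 j (Finset.mem_range.1 hj)]
  rw [hfun]
  have hK : ∀ t, 0 < t → lconv k (lconv κ f) t = lconv (HH (n - 1)) f t := by
    intro t ht
    rw [lconv_assoc_s12 hq hp hs hk hκ hfC ht]
    exact lconv_congr_s12 (fun s hs => by rw [lconv_comm_s12, hL s hs, HH]) (fun _ _ => rfl) ht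
  constructor
  · intro m hm t ht
    obtain ⟨d, hd, -⟩ := iter_hasDeriv hs hfC (n - 1) hK m (by omega) ht
    exact hd.differentiableAt
  · intro t ht
    obtain ⟨d, hd, hd2⟩ := iter_hasDeriv hs hfC (n - 1) hK (n - 1) le_rfl ht
    have : n = n - 1 + 1 := by omega
    rw [this, iteratedDeriv_succ, hd.deriv, hd2 rfl]
end
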